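/- Let Ω ⊂ ℝ^d be compact and convex with non-negligible interior, μ, ν ∈ 𝒫(Ω) with μ absolutely continuous, λ > 0. Let γ₀ be an optimal plan for the transport of μ to ν under the Huber cost c_{2,λ}, and let φ_λ be a c_{2,λ}-concave solution of sup_{φ ∈ C(Ω)} ∫φ^{c_{2,λ}}dμ + ∫φ dν. If (x,y) ∈ supp(γ₀), x is in the interior of Ω, and φ_λ^{c₂} is differentiable at x, then ∇φ_λ^{c₂}(x) = x − y if |x−y| ≤ λ, and ∇φ_λ^{c₂}(x) = λ(x−y)/|x−y| if |x−y| ≥ λ. In particular, there is at most one y ∈ B̄_λ(x) with (x,y) ∈ supp(γ₀), and in that case x − ∇φ_λ^{c₂}(x) = y. -/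

import Mathlib

/-!
Write `c = c_{2,λ}`. The proof rests on complementary slackness: a dual maximizer `φ` satisfies
`φ^c(x) + φ(y) = c(x, y)` on the support of every optimal plan (`slackness`). The pointwise
inequality `≤` is immediate, so equality almost everywhere (and, by continuity, on the support)
follows once the primal optimum does not exceed the dual one. This absence of a duality gap is
`exists_coupling_le`: on functions `h` on `Ω × Ω`, the functional
`p(h) = inf {∫ f dμ + ∫ g dν : f ⊕ g ≥ h}` is sublinear, Hahn–Banach gives a linear functional
below `p` that touches it at `-c`, and its Riesz representing measure is a coupling of `μ` and `ν`
whose cost is the dual value.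

For `(x, y)` in the support let `z` be the point of the segment `[x, y]` at distance
`min(|x - y|, λ)` from `x`; it lies in `Ω` by convexity, and `c(x, y) = c₂(x, z) + λ|z - y|`.
A `c`-concave function is `λ`-Lipschitz, hence
`φ^{c₂}(x) ≥ φ^c(x) = c₂(x, z) + λ|z - y| - φ(y) ≥ c₂(x, z) - φ(z)`. Thus the smooth function
`c₂(·, z) - φ(z) ≥ φ^{c₂}` touches `φ^{c₂}` at `x`, and the gradient of `φ^{c₂}` there is `x - z`
(`gradient_of_split`).
-/

open MeasureTheory Filter Topology

noncomputable section

abbrev Ed (d : ℕ) := EuclideanSpace ℝ (Fin d)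

variable {d : ℕ}

/-- `γ` is a coupling (transport plan) between `μ` and `ν`. -/
def IsCoupling (μ ν : Measure (Ed d)) (γ : Measure (Ed d × Ed d)) : Prop :=
  γ.map Prod.fst = μ ∧ γ.map Prod.snd = ν

/-- The optimal transport cost `𝓘_c(μ,ν)` for the pointwise cost `c`. -/
def tCost (c : Ed d → Ed d → ℝ) (μ ν : Measure (Ed d)) : ℝ :=
  sInf {r | ∃ γ : Measure (Ed d × Ed d), IsCoupling μ ν γ ∧ r = ∫ p, c p.1 p.2 ∂γ}

/-- The Wasserstein-1 distance. -/
def W1 (μ ν : Measure (Ed d)) : ℝ := tCost (fun x y => ‖x - y‖) μ ν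

/-- The squared Wasserstein-2 distance `W₂²(μ,ν)`. -/
def W2sq (μ ν : Measure (Ed d)) : ℝ := tCost (fun x y => ‖x - y‖ ^ 2) μ ν

/-- The quadratic cost `c₂(x,y) = |x-y|²/2`. -/
def c2 (x y : Ed d) : ℝ := ‖x - y‖ ^ 2 / 2

/-- The Huber cost `c_{2,λ}`. -/
def huber (lam : ℝ) (x y : Ed d) : ℝ :=
  if ‖x - y‖ ≤ lam then ‖x - y‖ ^ 2 / 2 else lam * ‖x - y‖ - lam ^ 2 / 2

/-- The `c`-transform on `Ω`: `φ^c(x) = inf_{y ∈ Ω} c(x,y) - φ(y)`. -/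
def ctrans (c : Ed d → Ed d → ℝ) (Ω : Set (Ed d)) (φ : Ed d → ℝ) (x : Ed d) : ℝ :=
  sInf ((fun y => c x y - φ y) '' Ω)

/-- A Borel probability measure concentrated on `Ω`. -/
def ProbOn (Ω : Set (Ed d)) (μ : Measure (Ed d)) : Prop :=
  IsProbabilityMeasure μ ∧ μ Ωᶜ = 0

/-- `γ` is an optimal transport plan between `μ` and `ν` for cost `c`. -/
def IsOptimalPlan (c : Ed d → Ed d → ℝ) (μ ν : Measure (Ed d))
    (γ : Measure (Ed d × Ed d)) : Prop :=
  IsCoupling μ ν γ ∧ ∀ γ' : Measure (Ed d × Ed d), IsCoupling μ ν γ' →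
    ∫ p, c p.1 p.2 ∂γ ≤ ∫ p, c p.1 p.2 ∂γ'

/-- `T` is an optimal transport map from `μ` to `ν` for cost `c`. -/
def IsOptimalMap (c : Ed d → Ed d → ℝ) (μ ν : Measure (Ed d)) (T : Ed d → Ed d) : Prop :=
  AEMeasurable T μ ∧ μ.map T = ν ∧
    ∀ γ : Measure (Ed d × Ed d), IsCoupling μ ν γ →
      ∫ x, c x (T x) ∂μ ≤ ∫ p, c p.1 p.2 ∂γ

/-- The WROF functional `(1/2) W₂²(μ,ρ) + λ W₁(ρ,ν)`. -/
def wrof (lam : ℝ) (μ ν ρ : Measure (Ed d)) : ℝ := W2sq μ ρ / 2 + lam * W1 ρ ν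

/-- `ρ ∈ B_λ(μ)`: there exists an optimal plan for the Huber cost `c_{2,λ}` from `μ` to `ρ`
supported in `{|x-y| ≤ λ}`. -/
def Bset (lam : ℝ) (μ ρ : Measure (Ed d)) : Prop :=
  ∃ γ : Measure (Ed d × Ed d), IsOptimalPlan (huber lam) μ ρ γ ∧
    γ {p : Ed d × Ed d | lam < ‖p.1 - p.2‖} = 0

/-- `φ` solves the dual problem `sup_{φ ∈ λ-Lip(Ω)} ∫ φ^{c₂} dμ + ∫ φ dν`. -/
def DualSol (Ω : Set (Ed d)) (lam : ℝ) (μ ν : Measure (Ed d)) (φ : Ed d → ℝ) : Prop :=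
  LipschitzOnWith (Real.toNNReal lam) φ Ω ∧
    ∀ ψ : Ed d → ℝ, LipschitzOnWith (Real.toNNReal lam) ψ Ω →
      (∫ x, ctrans c2 Ω ψ x ∂μ) + ∫ x, ψ x ∂ν ≤ (∫ x, ctrans c2 Ω φ x ∂μ) + ∫ x, φ x ∂ν

/-- `φ ∈ ∂((1/2)W₂²(·,μ))(ρ)`, i.e. `φ ∈ C(Ω)` with `∫φ^{c₂}dμ + ∫φ dρ = (1/2)W₂²(ρ,μ)`. -/
def InSubdiffW2 (Ω : Set (Ed d)) (μ ρ : Measure (Ed d)) (φ : Ed d → ℝ) : Prop :=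
  ContinuousOn φ Ω ∧ (∫ x, ctrans c2 Ω φ x ∂μ) + ∫ x, φ x ∂ρ = W2sq ρ μ / 2

/-- The divergence `D_λ(ν,ρ)` with reference measure `μ`. -/
def Dlam (Ω : Set (Ed d)) (lam : ℝ) (μ ν ρ : Measure (Ed d)) : EReal :=
  ((W2sq ν μ / 2 : ℝ) : EReal) - ((W2sq ρ μ / 2 : ℝ) : EReal) -
    ⨆ φ ∈ {φ : Ed d → ℝ | InSubdiffW2 Ω μ ρ φ ∧ LipschitzOnWith (Real.toNNReal lam) φ Ω},
      (((∫ x, φ x ∂ν) - ∫ x, φ x ∂ρ : ℝ) : EReal)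

/-- `φ` is `c`-concave on `Ω`: `φ = ψ^c` for some `ψ`. -/
def CConcaveOn (c : Ed d → Ed d → ℝ) (Ω : Set (Ed d)) (φ : Ed d → ℝ) : Prop :=
  ∃ ψ : Ed d → ℝ, ∀ x ∈ Ω, φ x = ctrans c Ω ψ x

/-- The (topological) support of a measure. -/
def msupport {α : Type*} [TopologicalSpace α] [MeasurableSpace α] (γ : Measure α) : Set α :=
  {p | ∀ U : Set α, IsOpen U → p ∈ U → γ U ≠ 0}

/-! ### Kantorovich duality on a compact set -/

open scoped CompactlySupported

lemma ProbOn.ae_mem {Ω : Set (Ed d)} {μ : Measure (Ed d)} (hμ : ProbOn Ω μ) :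
    ∀ᵐ x ∂μ, x ∈ Ω := by
  rw [ae_iff]; exact hμ.2

lemma ProbOn.integrable {Ω : Set (Ed d)} {μ : Measure (Ed d)} (hμ : ProbOn Ω μ)
    (hΩ : IsCompact Ω) {f : Ed d → ℝ} (hf : ContinuousOn f Ω) : Integrable f μ := by
  have := hμ.1
  have h := hf.integrableOn_compact (μ := μ) hΩ
  rwa [IntegrableOn, Measure.restrict_eq_self_of_ae_mem hμ.ae_mem] at h

/-- The values `∫ f dμ + ∫ g dν` over all continuous pairs with `f ⊕ g ≥ h` on `Ω × Ω`. -/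
def majorValues (Ω : Set (Ed d)) (μ ν : Measure (Ed d)) (h : C(Ω × Ω, ℝ)) : Set ℝ :=
  {r | ∃ f g : Ed d → ℝ, ContinuousOn f Ω ∧ ContinuousOn g Ω ∧
    (∀ x y : Ω, h (x, y) ≤ f x + g y) ∧ r = (∫ x, f x ∂μ) + ∫ x, g x ∂ν}

/-- The sublinear functional `h ↦ inf {∫ f dμ + ∫ g dν : f ⊕ g ≥ h}`, whose linear minorants are
the couplings of `μ` and `ν`. -/
def majorInf (Ω : Set (Ed d)) (μ ν : Measure (Ed d)) (h : C(Ω × Ω, ℝ)) : ℝ :=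
  sInf (majorValues Ω μ ν h)

section Duality

variable {Ω : Set (Ed d)} {μ ν : Measure (Ed d)}

lemma le_of_mem_majorValues (hΩ : IsCompact Ω) (hμ : ProbOn Ω μ) (hν : ProbOn Ω ν)
    {h : C(Ω × Ω, ℝ)} {m : ℝ} (hm : ∀ p, m ≤ h p) {r : ℝ} (hr : r ∈ majorValues Ω μ ν h) :
    m ≤ r := by
  obtain ⟨f, g, hf, hg, hfg, rfl⟩ := hr
  have := hμ.1
  have := hν.1
  have h1 : ∀ y ∈ Ω, m - g y ≤ ∫ x, f x ∂μ := by
    intro y hy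
    have : ∫ _x, (m - g y) ∂μ ≤ ∫ x, f x ∂μ := by
      apply integral_mono_ae (integrable_const _) (hμ.integrable hΩ hf)
      filter_upwards [hμ.ae_mem] with x hx
      have := hm (⟨x, hx⟩, ⟨y, hy⟩)
      have := hfg ⟨x, hx⟩ ⟨y, hy⟩
      simp only at this
      linarith
    simpa using this
  have h2 : ∫ _y, (m - ∫ x, f x ∂μ) ∂ν ≤ ∫ y, g y ∂ν := by
    apply integral_mono_ae (integrable_const _) (hν.integrable hΩ hg)
    filter_upwards [hν.ae_mem] with y hy
    have := h1 y hy
    linarith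
  simp only [integral_const, probReal_univ, one_smul] at h2
  linarith

lemma exists_bound (hΩ : IsCompact Ω) (h : C(Ω × Ω, ℝ)) : ∃ M, ∀ p, |h p| ≤ M := by
  have := isCompact_iff_compactSpace.1 hΩ
  obtain ⟨M, hM⟩ := isCompact_univ.exists_bound_of_continuousOn (f := h) h.continuous.continuousOn
  exact ⟨M, fun p => by simpa using hM p trivial⟩

lemma bddBelow_majorValues (hΩ : IsCompact Ω) (hμ : ProbOn Ω μ) (hν : ProbOn Ω ν)
    (h : C(Ω × Ω, ℝ)) : BddBelow (majorValues Ω μ ν h) := by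
  obtain ⟨M, hM⟩ := exists_bound hΩ h
  exact ⟨-M, fun r hr => le_of_mem_majorValues hΩ hμ hν (fun p => neg_le_of_abs_le (hM p)) hr⟩

lemma nonempty_majorValues (hΩ : IsCompact Ω) (h : C(Ω × Ω, ℝ)) :
    (majorValues Ω μ ν h).Nonempty := by
  obtain ⟨M, hM⟩ := exists_bound hΩ h
  exact ⟨_, fun _ => M, fun _ => 0, continuousOn_const, continuousOn_const,
    fun x y => by simpa using le_of_abs_le (hM (x, y)), rfl⟩

lemma majorInf_le (hΩ : IsCompact Ω) (hμ : ProbOn Ω μ) (hν : ProbOn Ω ν)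
    {h : C(Ω × Ω, ℝ)} {f g : Ed d → ℝ} (hf : ContinuousOn f Ω) (hg : ContinuousOn g Ω)
    (hfg : ∀ x y : Ω, h (x, y) ≤ f x + g y) :
    majorInf Ω μ ν h ≤ (∫ x, f x ∂μ) + ∫ x, g x ∂ν :=
  csInf_le (bddBelow_majorValues hΩ hμ hν h) ⟨f, g, hf, hg, hfg, rfl⟩

lemma majorInf_add (hΩ : IsCompact Ω) (hμ : ProbOn Ω μ) (hν : ProbOn Ω ν)
    (h k : C(Ω × Ω, ℝ)) :
    majorInf Ω μ ν (h + k) ≤ majorInf Ω μ ν h + majorInf Ω μ ν k := by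
  have key : ∀ r ∈ majorValues Ω μ ν h, ∀ s ∈ majorValues Ω μ ν k,
      majorInf Ω μ ν (h + k) ≤ r + s := by
    rintro r ⟨f, g, hf, hg, hfg, rfl⟩ s ⟨f', g', hf', hg', hfg', rfl⟩
    have := majorInf_le hΩ hμ hν (h := h + k) (hf.add hf') (hg.add hg') (fun x y => by
      have := hfg x y
      have := hfg' x y
      simp only [ContinuousMap.coe_add, Pi.add_apply]
      linarith)
    simp only [Pi.add_apply] at this
    rw [integral_add (hμ.integrable hΩ hf) (hμ.integrable hΩ hf'),
      integral_add (hν.integrable hΩ hg) (hν.integrable hΩ hg')] at this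
    linarith
  have h1 : ∀ r ∈ majorValues Ω μ ν h, majorInf Ω μ ν (h + k) - r ≤ majorInf Ω μ ν k :=
    fun r hr => le_csInf (nonempty_majorValues hΩ k) fun s hs => by linarith [key r hr s hs]
  have h2 : majorInf Ω μ ν (h + k) - majorInf Ω μ ν k ≤ majorInf Ω μ ν h :=
    le_csInf (nonempty_majorValues hΩ h) fun r hr => by linarith [h1 r hr]
  linarith

lemma majorInf_smul_le (hΩ : IsCompact Ω) (hμ : ProbOn Ω μ) (hν : ProbOn Ω ν)
    {t : ℝ} (ht : 0 < t) (h : C(Ω × Ω, ℝ)) :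
    majorInf Ω μ ν (t • h) ≤ t * majorInf Ω μ ν h := by
  have : majorInf Ω μ ν (t • h) / t ≤ majorInf Ω μ ν h := by
    apply le_csInf (nonempty_majorValues hΩ h)
    rintro r ⟨f, g, hf, hg, hfg, rfl⟩
    have := majorInf_le hΩ hμ hν (h := t • h) (hf.const_smul t) (hg.const_smul t) (fun x y => by
      have := mul_le_mul_of_nonneg_left (hfg x y) ht.le
      simp only [ContinuousMap.coe_smul, Pi.smul_apply, smul_eq_mul]
      linarith)
    simp only [Pi.smul_apply, smul_eq_mul, integral_const_mul] at this
    rw [div_le_iff₀ ht]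
    linarith
  rw [div_le_iff₀ ht] at this
  linarith

lemma majorInf_smul (hΩ : IsCompact Ω) (hμ : ProbOn Ω μ) (hν : ProbOn Ω ν)
    (t : ℝ) (ht : 0 < t) (h : C(Ω × Ω, ℝ)) :
    majorInf Ω μ ν (t • h) = t * majorInf Ω μ ν h := by
  apply le_antisymm (majorInf_smul_le hΩ hμ hν ht h)
  have := majorInf_smul_le hΩ hμ hν (inv_pos.2 ht) (t • h)
  rw [smul_smul, inv_mul_cancel₀ ht.ne', one_smul] at this
  calc t * majorInf Ω μ ν h ≤ t * (t⁻¹ * majorInf Ω μ ν (t • h)) := by gcongr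
    _ = _ := by field_simp

/-- Hahn–Banach: a sublinear functional has a linear minorant touching it at a given point. -/
lemma exists_linear_le_touching {E : Type*} [AddCommGroup E] [Module ℝ E] (N : E → ℝ)
    (hsmul : ∀ c : ℝ, 0 < c → ∀ x, N (c • x) = c * N x) (hadd : ∀ x y, N (x + y) ≤ N x + N y)
    (k : E) : ∃ l : E →ₗ[ℝ] ℝ, l k = N k ∧ ∀ h, l h ≤ N h := by
  have h0 : N 0 = 0 := by
    have := hsmul 2 two_pos 0
    rw [smul_zero] at this
    linarith
  have H : ∀ c : ℝ, c • k = 0 → (RingHom.id ℝ) c • N k = 0 := by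
    intro c hc
    rcases smul_eq_zero.1 hc with rfl | rfl
    · simp
    · simp [h0]
  obtain ⟨l, hl, hl'⟩ := exists_extension_of_le_sublinear
    (LinearPMap.mkSpanSingleton' k (N k) H) N hsmul hadd (by
      rintro ⟨x, hx⟩
      obtain ⟨t, rfl⟩ := Submodule.mem_span_singleton.1 hx
      rw [LinearPMap.mkSpanSingleton'_apply]
      simp only [RingHom.id_apply, smul_eq_mul]
      rcases lt_trichotomy t 0 with ht | rfl | ht
      · have h1 := hsmul (-t) (by linarith) k
        have h2 := hadd (t • k) (-t • k)
        rw [neg_smul, add_neg_cancel, h0] at h2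
        rw [neg_smul] at h1
        linarith
      · simp [h0]
      · rw [hsmul t ht k])
  refine ⟨l, ?_, hl'⟩
  have := hl ⟨k, Submodule.mem_span_singleton_self k⟩
  exact this.trans (LinearPMap.mkSpanSingleton'_apply_self k (N k) H _)

/-- A one-sided comparison of integrals identifies finite measures: the reverse inequality follows
by passing to `-f`. -/
lemma measure_eq_of_integral_le {α β : Measure (Ed d)} [IsFiniteMeasure α] [IsFiniteMeasure β]
    (h : ∀ f : Ed d → ℝ, Continuous f → ∫ x, f x ∂α ≤ ∫ x, f x ∂β) : α = β := by
  apply ext_of_forall_integral_eq_of_IsFiniteMeasure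
  intro f
  apply le_antisymm (h f f.continuous)
  have := h (fun x => -f x) f.continuous.neg
  rw [integral_neg, integral_neg] at this
  linarith

/-- Kantorovich duality without gap: some coupling has cost at most every upper bound of the dual
values. The coupling is the Riesz measure of a Hahn–Banach functional below `majorInf` touching it
at `-c`. -/
theorem exists_coupling_le (hΩ : IsCompact Ω) (hμ : ProbOn Ω μ) (hν : ProbOn Ω ν)
    {c : Ed d → Ed d → ℝ} (hc : Continuous fun p : Ed d × Ed d => c p.1 p.2) {B : ℝ}
    (hB : ∀ f g : Ed d → ℝ, ContinuousOn f Ω → ContinuousOn g Ω →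
      (∀ x ∈ Ω, ∀ y ∈ Ω, f x + g y ≤ c x y) → (∫ x, f x ∂μ) + ∫ x, g x ∂ν ≤ B) :
    ∃ γ : Measure (Ed d × Ed d), IsCoupling μ ν γ ∧ ∫ p, c p.1 p.2 ∂γ ≤ B := by
  have := isCompact_iff_compactSpace.1 hΩ
  have := hμ.1
  have := hν.1
  let ι : Ω × Ω → Ed d × Ed d := fun p => (p.1.1, p.2.1)
  have hι : Continuous ι := by fun_prop
  -- Restriction to `Ω × Ω` of a continuous function.
  let res : ∀ F : Ed d × Ed d → ℝ, Continuous F → C(Ω × Ω, ℝ) := fun F hF =>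
    { toFun := fun p => F (ι p)
      continuous_toFun := hF.comp hι }
  obtain ⟨l, hlk, hl⟩ := exists_linear_le_touching (majorInf Ω μ ν)
    (majorInf_smul hΩ hμ hν) (majorInf_add hΩ hμ hν) (-res _ hc)
  let l' : C_c(Ω × Ω, ℝ) →ₗ[ℝ] ℝ :=
    { toFun := fun h => l h.toContinuousMap
      map_add' := fun h k => l.map_add h.toContinuousMap k.toContinuousMap
      map_smul' := fun t h => l.map_smul t h.toContinuousMap }
  have hpos : ∀ h : C(Ω × Ω, ℝ), (∀ p, 0 ≤ h p) → 0 ≤ l h := by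
    intro h hh
    have h1 := hl (-h)
    have h2 := majorInf_le hΩ hμ hν (h := -h) (f := fun _ => 0) (g := fun _ => 0)
      continuousOn_const continuousOn_const (fun x y => by
        have := hh (x, y)
        simpa using this)
    simp only [integral_zero, add_zero] at h2
    rw [map_neg] at h1
    linarith
  let Λ : C_c(Ω × Ω, ℝ) →ₚ[ℝ] ℝ :=
    PositiveLinearMap.mk₀ l' fun h hh => hpos h.toContinuousMap fun p => hh p
  let γ₁ : Measure (Ω × Ω) := RealRMK.rieszMeasure Λ
  have : IsFiniteMeasureOnCompacts γ₁ := by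
    have : γ₁.Regular := by
      change (RealRMK.rieszMeasure Λ).Regular
      infer_instance
    infer_instance
  have : IsFiniteMeasure γ₁ := CompactSpace.isFiniteMeasure
  have hint : ∀ F : Ed d × Ed d → ℝ, (hF : Continuous F) →
      ∫ p, F p ∂(γ₁.map ι) = l (res F hF) := by
    intro F hF
    rw [integral_map hι.measurable.aemeasurable hF.aestronglyMeasurable]
    exact RealRMK.integral_rieszMeasure Λ
      ⟨res F hF, HasCompactSupport.of_compactSpace _⟩
  have hfin : IsFiniteMeasure (γ₁.map ι) := inferInstance
  refine ⟨γ₁.map ι, ⟨?_, ?_⟩, ?_⟩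
  · apply measure_eq_of_integral_le
    intro f hf
    rw [integral_map measurable_fst.aemeasurable hf.aestronglyMeasurable,
      hint (fun p => f p.1) (hf.comp continuous_fst)]
    have := majorInf_le hΩ hμ hν (h := res (fun p => f p.1) (hf.comp continuous_fst))
      (f := f) (g := fun _ => 0) hf.continuousOn continuousOn_const (fun x y => by
        simp [res, ι])
    simp only [integral_zero, add_zero] at this
    exact (hl _).trans this
  · apply measure_eq_of_integral_le
    intro f hf
    rw [integral_map measurable_snd.aemeasurable hf.aestronglyMeasurable,
      hint (fun p => f p.2) (hf.comp continuous_snd)]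
    have := majorInf_le hΩ hμ hν (h := res (fun p => f p.2) (hf.comp continuous_snd))
      (f := fun _ => 0) (g := f) continuousOn_const hf.continuousOn (fun x y => by
        simp [res, ι])
    simp only [integral_zero, zero_add] at this
    exact (hl _).trans this
  · rw [hint _ hc]
    have h1 : -B ≤ majorInf Ω μ ν (-res _ hc) := by
      apply le_csInf (nonempty_majorValues hΩ _)
      rintro r ⟨f, g, hf, hg, hfg, rfl⟩
      have := hB (fun x => -f x) (fun x => -g x) hf.neg hg.neg (by
        intro x hx y hy
        have : -(c x y) ≤ f x + g y := hfg ⟨x, hx⟩ ⟨y, hy⟩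
        linarith)
      rw [integral_neg, integral_neg] at this
      linarith
    rw [← hlk, map_neg] at h1
    linarith

end Duality

/-! ### The Huber cost and its transform -/

lemma huber_comm (lam : ℝ) (x y : Ed d) : huber lam x y = huber lam y x := by
  simp only [huber, norm_sub_rev x y]

lemma huber_le_c2 (lam : ℝ) (x y : Ed d) : huber lam x y ≤ c2 x y := by
  unfold huber c2
  split_ifs
  · rfl
  · nlinarith [sq_nonneg (‖x - y‖ - lam)]

lemma huber_nonneg {lam : ℝ} (hlam : 0 < lam) (x y : Ed d) : 0 ≤ huber lam x y := by
  unfold huber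
  split_ifs <;> nlinarith [norm_nonneg (x - y)]

lemma huber_le_add {lam : ℝ} (hlam : 0 < lam) (x x' y : Ed d) :
    huber lam x y ≤ huber lam x' y + lam * ‖x - x'‖ := by
  have h1 : ‖x - y‖ ≤ ‖x - x'‖ + ‖x' - y‖ := norm_sub_le_norm_sub_add_norm_sub x x' y
  have h2 := norm_nonneg (x - y)
  have h3 := norm_nonneg (x' - y)
  have h4 := norm_nonneg (x - x')
  unfold huber
  generalize ‖x - y‖ = a at *
  generalize ‖x' - y‖ = b at *
  generalize ‖x - x'‖ = e at *
  split_ifs with ha hb hb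
  · rcases le_total a b with h | h
    · nlinarith
    · nlinarith [mul_nonneg (sub_nonneg.2 h) (sub_nonneg.2 ha),
        mul_nonneg (sub_nonneg.2 h) (sub_nonneg.2 hb)]
  · push Not at hb
    nlinarith
  · push Not at ha
    nlinarith [sq_nonneg (b - lam)]
  · nlinarith

lemma continuous_huber (lam : ℝ) :
    Continuous fun p : Ed d × Ed d => huber lam p.1 p.2 := by
  unfold huber
  refine Continuous.if_le (by fun_prop) (by fun_prop) (by fun_prop) (by fun_prop) ?_
  intro p hp
  rw [hp]
  ring

lemma ctrans_huber_le_add {lam : ℝ} (hlam : 0 < lam) (Ω : Set (Ed d)) (ψ : Ed d → ℝ)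
    (x x' : Ed d) :
    ctrans (huber lam) Ω ψ x ≤ ctrans (huber lam) Ω ψ x' + lam * ‖x - x'‖ := by
  have hpos : 0 ≤ lam * ‖x - x'‖ := by positivity
  unfold ctrans
  rcases Ω.eq_empty_or_nonempty with rfl | hne
  · simpa using hpos
  by_cases hb : BddBelow ((fun y => huber lam x y - ψ y) '' Ω)
  · rw [← sub_le_iff_le_add]
    apply le_csInf (hne.image _)
    rintro _ ⟨y, hy, rfl⟩
    have h1 := csInf_le hb (Set.mem_image_of_mem _ hy)
    have h2 := huber_le_add hlam x x' y
    simp only at h1 ⊢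
    linarith
  -- Unboundedness below does not depend on the base point, so both infima are the junk value `0`.
  · have hb' : ¬ BddBelow ((fun y => huber lam x' y - ψ y) '' Ω) := by
      rintro ⟨m, hm⟩
      apply hb
      refine ⟨m - lam * ‖x' - x‖, ?_⟩
      rintro _ ⟨y, hy, rfl⟩
      have h1 := hm (Set.mem_image_of_mem _ hy)
      have h2 := huber_le_add hlam x' x y
      simp only at h1 ⊢
      linarith
    rw [Real.sInf_of_not_bddBelow hb, Real.sInf_of_not_bddBelow hb']
    simpa using hpos

lemma continuous_ctrans_huber {lam : ℝ} (hlam : 0 < lam) (Ω : Set (Ed d)) (ψ : Ed d → ℝ) :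
    Continuous (ctrans (huber lam) Ω ψ) := by
  have : LipschitzWith (Real.toNNReal lam) (ctrans (huber lam) Ω ψ) := by
    apply LipschitzWith.of_le_add_mul
    intro x y
    rw [Real.coe_toNNReal _ hlam.le, dist_eq_norm]
    exact ctrans_huber_le_add hlam Ω ψ x y
  exact this.continuous

/-- For a nonnegative cost and continuous `φ` on compact `Ω`, the infimum defining `φ^c` is not a
junk value. -/
lemma ctrans_le {c : Ed d → Ed d → ℝ} (hc : ∀ x y, 0 ≤ c x y) {Ω : Set (Ed d)}
    (hΩ : IsCompact Ω) {φ : Ed d → ℝ} (hφ : ContinuousOn φ Ω) (x : Ed d) {y : Ed d}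
    (hy : y ∈ Ω) : ctrans c Ω φ x ≤ c x y - φ y := by
  refine csInf_le ?_ (Set.mem_image_of_mem (fun y => c x y - φ y) hy)
  obtain ⟨M, hM⟩ := hΩ.exists_bound_of_continuousOn hφ
  refine ⟨-M, ?_⟩
  rintro _ ⟨z, hz, rfl⟩
  have h1 := le_of_abs_le (hM z hz)
  have h2 := hc x z
  simp only
  linarith

lemma c2_nonneg (x y : Ed d) : 0 ≤ c2 x y := by
  unfold c2; positivity

/-! ### Complementary slackness on the support -/

lemma ae_mem_prod {Ω : Set (Ed d)} {μ ν : Measure (Ed d)} (hμ : ProbOn Ω μ) (hν : ProbOn Ω ν)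
    {γ : Measure (Ed d × Ed d)} (hγ : IsCoupling μ ν γ) : ∀ᵐ p ∂γ, p.1 ∈ Ω ∧ p.2 ∈ Ω := by
  have h1 : ∀ᵐ x ∂(γ.map Prod.fst), x ∈ Ω := by rw [hγ.1]; exact hμ.ae_mem
  have h2 : ∀ᵐ x ∂(γ.map Prod.snd), x ∈ Ω := by rw [hγ.2]; exact hν.ae_mem
  exact (ae_of_ae_map measurable_fst.aemeasurable h1).and
    (ae_of_ae_map measurable_snd.aemeasurable h2)

lemma mem_of_mem_msupport {Ω : Set (Ed d)} (hΩ : IsClosed Ω) {μ ν : Measure (Ed d)}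
    (hμ : ProbOn Ω μ) (hν : ProbOn Ω ν) {γ : Measure (Ed d × Ed d)} (hγ : IsCoupling μ ν γ)
    {x y : Ed d} (h : (x, y) ∈ msupport γ) : x ∈ Ω ∧ y ∈ Ω := by
  by_contra hcon
  refine h (Ω ×ˢ Ω)ᶜ (hΩ.prod hΩ).isOpen_compl hcon ?_
  exact ae_iff.1 (ae_mem_prod hμ hν hγ)

/-- The nontrivial half of complementary slackness: `c(x, y) ≤ φ^c(x) + φ(y)` on the support of an
optimal Huber plan, for a dual maximizer `φ`. The other half is `ctrans_le`. -/
lemma slackness {Ω : Set (Ed d)} (hΩ : IsCompact Ω) {μ ν : Measure (Ed d)}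
    (hμ : ProbOn Ω μ) (hν : ProbOn Ω ν) {lam : ℝ} (hlam : 0 < lam)
    {γ₀ : Measure (Ed d × Ed d)} (hγ : IsOptimalPlan (huber lam) μ ν γ₀)
    {φ : Ed d → ℝ} (hφ : ContinuousOn φ Ω)
    (hφmax : ∀ ψ : Ed d → ℝ, ContinuousOn ψ Ω →
      (∫ x, ctrans (huber lam) Ω ψ x ∂μ) + ∫ x, ψ x ∂ν
        ≤ (∫ x, ctrans (huber lam) Ω φ x ∂μ) + ∫ x, φ x ∂ν)
    {x y : Ed d} (hxy : (x, y) ∈ msupport γ₀) :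
    huber lam x y ≤ ctrans (huber lam) Ω φ x + φ y := by
  have := hμ.1
  have := hν.1
  obtain ⟨hxΩ, hyΩ⟩ := mem_of_mem_msupport hΩ.isClosed hμ hν hγ.1 hxy
  have hTc := continuous_ctrans_huber hlam Ω φ
  obtain ⟨γ, hγc, hγle⟩ := exists_coupling_le hΩ hμ hν (continuous_huber lam)
    (B := (∫ x, ctrans (huber lam) Ω φ x ∂μ) + ∫ x, φ x ∂ν) (by
      intro f g hf hg hfg
      refine le_trans ?_ (hφmax g hg)
      refine add_le_add_left ?_ _
      apply integral_mono_ae (hμ.integrable hΩ hf)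
        (hμ.integrable hΩ (continuous_ctrans_huber hlam Ω g).continuousOn)
      filter_upwards [hμ.ae_mem] with x hx
      apply le_csInf (Set.Nonempty.image _ ⟨x, hx⟩)
      rintro _ ⟨y, hy, rfl⟩
      have := hfg x hx y hy
      simp only
      linarith)
  have hopt := (hγ.2 γ hγc).trans hγle
  have hprod := ae_mem_prod hμ hν hγ.1
  have : IsProbabilityMeasure γ₀ := by
    have : IsProbabilityMeasure (γ₀.map Prod.fst) := by rw [hγ.1.1]; exact hμ.1
    exact Measure.isProbabilityMeasure_of_map Prod.fst
  -- Integrals of functions of one variable against the plan are integrals against the marginals.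
  have hTint : Integrable (fun p : Ed d × Ed d => ctrans (huber lam) Ω φ p.1) γ₀ := by
    have := hμ.integrable hΩ hTc.continuousOn
    rw [← hγ.1.1] at this
    exact this.comp_measurable measurable_fst
  have hφint' : Integrable φ (γ₀.map Prod.snd) := by
    rw [hγ.1.2]; exact hν.integrable hΩ hφ
  have hφint : Integrable (fun p : Ed d × Ed d => φ p.2) γ₀ :=
    hφint'.comp_measurable measurable_snd
  have hcint : Integrable (fun p : Ed d × Ed d => huber lam p.1 p.2) γ₀ := by
    have h := (continuous_huber lam).continuousOn.integrableOn_compact (μ := γ₀) (hΩ.prod hΩ)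
    have hprod' : ∀ᵐ p ∂γ₀, p ∈ Ω ×ˢ Ω := hprod
    rwa [IntegrableOn, Measure.restrict_eq_self_of_ae_mem hprod'] at h
  let F : Ed d × Ed d → ℝ := fun p => huber lam p.1 p.2 - ctrans (huber lam) Ω φ p.1 - φ p.2
  have hFint : Integrable F γ₀ := (hcint.sub hTint).sub hφint
  have hF0 : 0 ≤ᵐ[γ₀] F := by
    filter_upwards [hprod] with p hp
    have := ctrans_le (huber_nonneg hlam) hΩ hφ p.1 hp.2
    simp only [F, Pi.zero_apply]
    linarith
  have hFle : ∫ p, F p ∂γ₀ ≤ 0 := by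
    simp only [F]
    have e0 := integral_sub (hcint.sub hTint) hφint
    simp only [Pi.sub_apply] at e0
    rw [e0, integral_sub hcint hTint]
    have e1 : ∫ p, ctrans (huber lam) Ω φ p.1 ∂γ₀ = ∫ x, ctrans (huber lam) Ω φ x ∂μ := by
      rw [← hγ.1.1, integral_map measurable_fst.aemeasurable hTc.aestronglyMeasurable]
    have e2 : ∫ p, φ p.2 ∂γ₀ = ∫ x, φ x ∂ν := by
      rw [← hγ.1.2, integral_map measurable_snd.aemeasurable hφint'.aestronglyMeasurable]
    rw [e1, e2]
    linarith
  have hFz : F =ᵐ[γ₀] 0 :=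
    (integral_eq_zero_iff_of_nonneg_ae hF0 hFint).1
      (le_antisymm hFle (integral_nonneg_of_ae hF0))
  have hFcont : ContinuousOn F (Ω ×ˢ Ω) :=
    ((continuous_huber lam).continuousOn.sub (hTc.comp continuous_fst).continuousOn).sub
      (hφ.comp continuousOn_snd fun p hp => hp.2)
  by_contra hlt
  push Not at hlt
  have hFpos : 0 < F (x, y) := by
    simp only [F]
    linarith
  -- By continuity `F > 0` on a neighbourhood of `(x, y)` in `Ω × Ω`, which then is negligible.
  have hnhds : F ⁻¹' Set.Ioi 0 ∈ 𝓝[Ω ×ˢ Ω] (x, y) :=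
    hFcont (x, y) ⟨hxΩ, hyΩ⟩ (Ioi_mem_nhds hFpos)
  obtain ⟨U, hU, hxyU, hUF⟩ := mem_nhdsWithin.1 hnhds
  refine hxy U hU hxyU ?_
  have : ∀ᵐ p ∂γ₀, p ∉ U := by
    filter_upwards [hFz, hprod] with p hp1 hp2 hpU
    have h3 : 0 < F p := hUF ⟨hpU, hp2⟩
    rw [hp1] at h3
    exact lt_irrefl _ h3
  simpa [ae_iff] using this

/-! ### The gradient -/

/-- If `z` attains the infimum defining `φ^{c₂}(x)`, then `c₂(·, z) - φ(z)` touches `φ^{c₂}` from above at `x`, so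
the gradients agree. -/
lemma gradient_ctrans_c2 {Ω : Set (Ed d)} (hΩ : IsCompact Ω) {φ : Ed d → ℝ}
    (hφ : ContinuousOn φ Ω) {x z : Ed d} (hz : z ∈ Ω)
    (hdiff : DifferentiableAt ℝ (ctrans c2 Ω φ) x)
    (heq : c2 x z - φ z ≤ ctrans c2 Ω φ x) : gradient (ctrans c2 Ω φ) x = x - z := by
  have hc2 : HasGradientAt (fun w : Ed d => c2 w z) (x - z) x := by
    have h1 : HasFDerivAt (fun w : Ed d => w - z) (ContinuousLinearMap.id ℝ (Ed d)) x :=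
      (hasFDerivAt_id x).sub_const z
    have h2 := (h1.norm_sq).mul_const (1 / 2 : ℝ)
    rw [hasGradientAt_iff_hasFDerivAt]
    have h3 : (fun w : Ed d => c2 w z) = fun w => ‖w - z‖ ^ 2 * (1 / 2) := by
      funext w; simp only [c2]; ring
    rw [h3]
    have h4 : InnerProductSpace.toDual ℝ (Ed d) (x - z) =
        (1 / 2 : ℝ) • (2 • (innerSL ℝ (x - z)).comp (ContinuousLinearMap.id ℝ (Ed d))) := by
      ext v
      simp
    rw [h4]
    exact h2
  have hmin : IsLocalMin (fun w => c2 w z - ctrans c2 Ω φ w) x := by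
    refine Filter.Eventually.of_forall fun w => ?_
    have := ctrans_le c2_nonneg hΩ hφ w hz
    simp only
    linarith
  have hg := hc2.hasFDerivAt.sub hdiff.hasGradientAt.hasFDerivAt
  have h0 := hmin.hasFDerivAt_eq_zero hg
  have h1 := sub_eq_zero.1 h0
  exact ((InnerProductSpace.toDual ℝ (Ed d)).injective h1).symm

/-- If the Huber cost of `(x, y)` pays for a quadratic step from `x` to `z` followed by a step from
`z` to `y` at price `λ` per unit length, then the `λ`-Lipschitz bound on `φ` makes `z` a minimizer
for `φ^{c₂}(x)`. -/
lemma gradient_of_split {Ω : Set (Ed d)} (hΩ : IsCompact Ω) {lam : ℝ} (hlam : 0 < lam)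
    {φ : Ed d → ℝ} (hφ : ContinuousOn φ Ω) (hconc : CConcaveOn (huber lam) Ω φ)
    {x y z : Ed d} (hy : y ∈ Ω) (hz : z ∈ Ω)
    (hdiff : DifferentiableAt ℝ (ctrans c2 Ω φ) x)
    (hslack : huber lam x y ≤ ctrans (huber lam) Ω φ x + φ y)
    (hsplit : c2 x z + lam * ‖y - z‖ ≤ huber lam x y) :
    gradient (ctrans c2 Ω φ) x = x - z := by
  apply gradient_ctrans_c2 hΩ hφ hz hdiff
  have h1 : ctrans (huber lam) Ω φ x ≤ ctrans c2 Ω φ x := by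
    apply le_csInf (Set.Nonempty.image _ ⟨y, hy⟩)
    rintro _ ⟨w, hw, rfl⟩
    have h2 := ctrans_le (huber_nonneg hlam) hΩ hφ x hw
    have h3 := huber_le_c2 lam x w
    simp only
    linarith
  have h2 : φ y ≤ φ z + lam * ‖y - z‖ := by
    obtain ⟨ψ, hψ⟩ := hconc
    rw [hψ y hy, hψ z hz]
    exact ctrans_huber_le_add hlam Ω ψ y z
  linarith

/-- gradient of `φ_λ^{c₂}` on the support of an optimal Huber plan. With
`Ω ⊂ ℝ^d` compact convex with non-negligible interior, `μ, ν ∈ 𝒫(Ω)`, `μ ≪ Lebesgue`,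
`λ > 0`, `γ₀` an optimal plan for the Huber cost `c_{2,λ}`, and `φ_λ` a `c_{2,λ}`-concave
solution of `sup_{φ ∈ C(Ω)} ∫φ^{c_{2,λ}}dμ + ∫φ dν`: if `x ∈ int Ω` is a differentiability
point of `φ_λ^{c₂}`, then for any `y` with `(x,y) ∈ supp γ₀`, `∇φ_λ^{c₂}(x) = x - y` when
`|x-y| ≤ λ` and `∇φ_λ^{c₂}(x) = λ(x-y)/|x-y|` when `|x-y| ≥ λ`; in particular there is at
most one `y ∈ B̄_λ(x)` with `(x,y) ∈ supp γ₀`, and then `x - ∇φ_λ^{c₂}(x) = y`. -/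
theorem stmt12 (d : ℕ) (Ω : Set (Ed d)) (hΩc : IsCompact Ω) (hΩconv : Convex ℝ Ω)
    (hΩint : volume (interior Ω) ≠ 0)
    (μ ν : Measure (Ed d)) (hμ : ProbOn Ω μ) (hν : ProbOn Ω ν)
    (hμac : μ ≪ (volume : Measure (Ed d)))
    (lam : ℝ) (hlam : 0 < lam)
    (γ₀ : Measure (Ed d × Ed d)) (hγ : IsOptimalPlan (huber lam) μ ν γ₀)
    (φlam : Ed d → ℝ) (hφcont : ContinuousOn φlam Ω)
    (hφconc : CConcaveOn (huber lam) Ω φlam)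
    (hφmax : ∀ ψ : Ed d → ℝ, ContinuousOn ψ Ω →
      (∫ x, ctrans (huber lam) Ω ψ x ∂μ) + ∫ x, ψ x ∂ν
        ≤ (∫ x, ctrans (huber lam) Ω φlam x ∂μ) + ∫ x, φlam x ∂ν)
    (x : Ed d) (hx : x ∈ interior Ω)
    (hdiff : DifferentiableAt ℝ (ctrans c2 Ω φlam) x) :
    (∀ y : Ed d, (x, y) ∈ msupport γ₀ →
      (‖x - y‖ ≤ lam →
        gradient (ctrans c2 Ω φlam) x = x - y ∧ x - gradient (ctrans c2 Ω φlam) x = y) ∧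
      (lam ≤ ‖x - y‖ →
        gradient (ctrans c2 Ω φlam) x = (lam / ‖x - y‖) • (x - y))) ∧
    (∀ y₁ y₂ : Ed d, (x, y₁) ∈ msupport γ₀ → ‖x - y₁‖ ≤ lam →
      (x, y₂) ∈ msupport γ₀ → ‖x - y₂‖ ≤ lam → y₁ = y₂) := by
  have near : ∀ y : Ed d, (x, y) ∈ msupport γ₀ → ‖x - y‖ ≤ lam →
      gradient (ctrans c2 Ω φlam) x = x - y := by
    intro y hxy hle
    have hy := (mem_of_mem_msupport hΩc.isClosed hμ hν hγ.1 hxy).2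
    refine gradient_of_split hΩc hlam hφcont hφconc hy hy hdiff
      (slackness hΩc hμ hν hlam hγ hφcont hφmax hxy) ?_
    simp [huber, c2, hle]
  refine ⟨fun y hxy => ⟨fun hle => ?_, fun hge => ?_⟩, fun y₁ y₂ h₁ hle₁ h₂ hle₂ => ?_⟩
  · rw [near y hxy hle]
    exact ⟨rfl, by abel⟩
  · obtain ⟨hxΩ, hyΩ⟩ := mem_of_mem_msupport hΩc.isClosed hμ hν hγ.1 hxy
    have hr : 0 < ‖x - y‖ := hlam.trans_le hge
    set t := lam / ‖x - y‖ with ht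
    have ht0 : 0 < t := div_pos hlam hr
    have ht1 : t ≤ 1 := (div_le_one hr).2 hge
    have htr : t * ‖x - y‖ = lam := div_mul_cancel₀ _ hr.ne'
    -- The point of the segment `[x, y]` at distance `λ` from `x`.
    have hz : x - t • (x - y) ∈ Ω := by
      have := hΩconv hxΩ hyΩ (sub_nonneg.2 ht1) ht0.le (by ring)
      convert this using 1
      module
    have hyz : y - (x - t • (x - y)) = (t - 1) • (x - y) := by module
    have := gradient_of_split hΩc hlam hφcont hφconc hyΩ hz hdiff
      (slackness hΩc hμ hν hlam hγ hφcont hφmax hxy) (by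
        rw [hyz, c2, sub_sub_cancel, norm_smul, norm_smul, Real.norm_of_nonneg ht0.le,
          Real.norm_of_nonpos (by linarith), htr]
        unfold huber
        split_ifs with hle
        · have : ‖x - y‖ = lam := le_antisymm hle hge
          rw [this] at htr ⊢
          nlinarith
        · nlinarith)
    rw [this, sub_sub_cancel]
  · have := (near y₁ h₁ hle₁).symm.trans (near y₂ h₂ hle₂)
    exact sub_right_injective this
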